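/- For every integer k ≥ 1, the following identity holds in the polynomial ring ℤ[t]: the sum over all simple graphs G on the vertex set Fin k of (−1)^{e(G)} · t^{c(G)} equals the falling factorial ∏_{l=0}^{k−1} (t − l), where e(G) is the number of edges of G and c(G) is the number of connected components of G. -/

import Mathlib

open scoped Classical

/-!
Expand each `q ^ c(G)` as the number of maps `V → Fin q` that are constant on the components of `G`,
and exchange the two sums. For a fixed `f`, the graphs `G` compatible with `f` are the subgraphs of
the graph of `f`-monochromatic edges, and their signed count vanishes unless that graph is empty,
i.e. unless `f` is a proper coloring. Hence the sum is the number `q (q - 1) ⋯ (q - |V| + 1)` of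
proper `q`-colorings of the complete graph, and a polynomial is determined by its values at the
natural numbers `q`.
-/

section MonochromaticSubgraph

variable {V α : Type*} (H : SimpleGraph V) (f : V → α)

/-- The subgraph of `H` formed by the monochromatic edges of the vertex labelling `f`, which is not
required to be a proper coloring. -/
def monochromaticSubgraph : SimpleGraph V where
  Adj u v := H.Adj u v ∧ f u = f v
  symm := ⟨fun _ _ h => ⟨h.1.symm, h.2.symm⟩⟩
  loopless := ⟨fun _ h => h.1.ne rfl⟩

variable {H f}

lemma reachableSetoid_le_ker_iff {G : SimpleGraph V} :
    G.reachableSetoid ≤ Setoid.ker f ↔ ∀ u v, G.Adj u v → f u = f v := by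
  refine ⟨fun h u v huv => h huv.reachable, fun h u v huv => ?_⟩
  obtain ⟨p⟩ : G.Reachable u v := huv
  induction p with
  | nil => rfl
  | cons huw _ ih => exact (h _ _ huw).trans ih

lemma le_monochromaticSubgraph_iff {G : SimpleGraph V} :
    G ≤ monochromaticSubgraph H f ↔ G ≤ H ∧ G.reachableSetoid ≤ Setoid.ker f := by
  rw [reachableSetoid_le_ker_iff]
  exact ⟨fun h => ⟨fun _ _ huv => (h huv).1, fun _ _ huv => (h huv).2⟩,
    fun h _ _ huv => ⟨h.1 huv, h.2 _ _ huv⟩⟩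

lemma monochromaticSubgraph_eq_bot_iff :
    monochromaticSubgraph H f = ⊥ ↔ ∀ u v, H.Adj u v → f u ≠ f v := by
  simp [SimpleGraph.eq_bot_iff_forall_not_adj, monochromaticSubgraph]

/-- Proper colorings, encoded as the labellings without monochromatic edges. -/
def coloringEquivMonochromaticSubgraphEqBot :
    H.Coloring α ≃ {f : V → α // monochromaticSubgraph H f = ⊥} where
  toFun C := ⟨C, monochromaticSubgraph_eq_bot_iff.2 fun _ _ => C.valid⟩
  invFun f := .mk f.1 (monochromaticSubgraph_eq_bot_iff.1 f.2 _ _)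

/-- Proper colorings of a complete graph, as injections of the vertices into the colors. -/
def topColoringEquivEmbedding : (⊤ : SimpleGraph V).Coloring α ≃ (V ↪ α) where
  toFun C := ⟨C, C.injective_of_top_hom⟩
  invFun f := .mk f fun huv => f.injective.ne huv.ne

end MonochromaticSubgraph

section SubgraphExpansion

variable {V α R : Type*}

lemma edgeFinset_fromEdgeSet_of_subset {H : SimpleGraph V} {s : Finset (Sym2 V)}
    [Fintype H.edgeSet] {_ : Fintype (SimpleGraph.fromEdgeSet (s : Set (Sym2 V))).edgeSet}
    (hs : s ⊆ H.edgeFinset) : (SimpleGraph.fromEdgeSet (s : Set (Sym2 V))).edgeFinset = s := by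
  rw [← Finset.coe_subset, SimpleGraph.coe_edgeFinset] at hs
  rw [← Finset.coe_inj, SimpleGraph.coe_edgeFinset, SimpleGraph.edgeSet_fromEdgeSet,
    sdiff_eq_left, ← Set.subset_compl_iff_disjoint_right]
  exact hs.trans H.edgeSet_subset_compl_diagSet

variable [Fintype V]

lemma natCard_edgeSet (G : SimpleGraph V) : Nat.card G.edgeSet = G.edgeFinset.card := by
  rw [Nat.card_eq_fintype_card, SimpleGraph.edgeFinset_card]

variable [Fintype α] [DecidableEq V]

lemma card_filter_reachableSetoid_le_ker (G : SimpleGraph V) :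
    Finset.card {f : V → α | G.reachableSetoid ≤ Setoid.ker f} =
      Fintype.card α ^ Nat.card G.ConnectedComponent := by
  have labellingEquiv :
      {f : V → α // G.reachableSetoid ≤ Setoid.ker f} ≃ (G.ConnectedComponent → α) :=
    Setoid.liftEquiv G.reachableSetoid
  rw [← Fintype.card_subtype, Fintype.card_congr labellingEquiv, Fintype.card_fun,
    Nat.card_eq_fintype_card]

lemma sum_le_pow_card_edgeSet [CommSemiring R] (H : SimpleGraph V) (x : R) :
    ∑ G : SimpleGraph V with G ≤ H, x ^ Nat.card G.edgeSet = (x + 1) ^ Nat.card H.edgeSet := by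
  simp only [natCard_edgeSet]
  calc
    _ = ∑ s ∈ H.edgeFinset.powerset, x ^ s.card := by
      refine Finset.sum_nbij' (fun G => G.edgeFinset) (fun s => .fromEdgeSet s)
        (fun G hG => by simpa using hG) (fun s hs => ?_) (fun G _ => by simp)
        (fun s hs => edgeFinset_fromEdgeSet_of_subset (Finset.mem_powerset.1 hs)) (fun _ _ => rfl)
      rw [Finset.mem_powerset] at hs
      rwa [Finset.mem_filter_univ, ← SimpleGraph.edgeFinset_subset_edgeFinset,
        edgeFinset_fromEdgeSet_of_subset hs]
    _ = (x + 1) ^ H.edgeFinset.card := by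
      simpa only [one_pow, mul_one] using Finset.sum_pow_mul_eq_add_pow x 1 H.edgeFinset

/-- The Fortuin–Kasteleyn expansion of the Potts partition function. -/
theorem sum_le_pow_card_edgeSet_mul_pow_card_connectedComponent [CommSemiring R]
    (H : SimpleGraph V) (x : R) :
    ∑ G : SimpleGraph V with G ≤ H,
        x ^ Nat.card G.edgeSet * (Fintype.card α : R) ^ Nat.card G.ConnectedComponent =
      ∑ f : V → α, (x + 1) ^ Nat.card (monochromaticSubgraph H f).edgeSet :=
  calc
    _ = ∑ G : SimpleGraph V with G ≤ H,
          ∑ f : V → α with G.reachableSetoid ≤ Setoid.ker f, x ^ Nat.card G.edgeSet := by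
      simp only [Finset.sum_const, card_filter_reachableSetoid_le_ker, nsmul_eq_mul, Nat.cast_pow,
        mul_comm]
    _ = ∑ f : V → α, ∑ G : SimpleGraph V with G ≤ monochromaticSubgraph H f,
          x ^ Nat.card G.edgeSet :=
      Finset.sum_comm' (by simp [le_monochromaticSubgraph_iff])
    _ = _ := by simp only [sum_le_pow_card_edgeSet]

/-- Whitney's subgraph expansion of the chromatic polynomial. -/
theorem sum_le_neg_one_pow_card_edgeSet_mul_pow_card_connectedComponent [CommRing R]
    (H : SimpleGraph V) :
    ∑ G : SimpleGraph V with G ≤ H,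
        (-1 : R) ^ Nat.card G.edgeSet * (Fintype.card α : R) ^ Nat.card G.ConnectedComponent =
      Nat.card (H.Coloring α) := by
  have card_edgeSet_eq_zero (f : V → α) : Nat.card (monochromaticSubgraph H f).edgeSet = 0 ↔
      monochromaticSubgraph H f = ⊥ := by
    rw [natCard_edgeSet, Finset.card_eq_zero, SimpleGraph.edgeFinset_eq_empty]
  rw [Nat.card_congr coloringEquivMonochromaticSubgraphEqBot, Nat.card_eq_fintype_card,
    Fintype.card_subtype]
  simp only [sum_le_pow_card_edgeSet_mul_pow_card_connectedComponent, neg_add_cancel, zero_pow_eq,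
    card_edgeSet_eq_zero, Finset.sum_boole]

end SubgraphExpansion

lemma card_coloring_top {V α : Type*} [Fintype V] [Fintype α] :
    Nat.card ((⊤ : SimpleGraph V).Coloring α) =
      (Fintype.card α).descFactorial (Fintype.card V) := by
  rw [Nat.card_congr topColoringEquivEmbedding, Nat.card_eq_fintype_card, Fintype.card_embedding_eq]

theorem sum_graphs_sign_pow_components_eq_falling_factorial_general
    {V : Type*} [Fintype V] [DecidableEq V] :
    ∑ G : SimpleGraph V,
        (-1 : Polynomial ℤ) ^ (Nat.card G.edgeSet) *
          (Polynomial.X : Polynomial ℤ) ^ (Nat.card G.ConnectedComponent) =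
      ∏ l ∈ Finset.range (Fintype.card V),
        ((Polynomial.X : Polynomial ℤ) - Polynomial.C (l : ℤ)) := by
  apply Polynomial.eq_of_infinite_eval_eq
  refine (Set.infinite_range_of_injective (Nat.cast_injective (R := ℤ))).mono ?_
  rintro _ ⟨q, rfl⟩
  have whitney := sum_le_neg_one_pow_card_edgeSet_mul_pow_card_connectedComponent
    (R := ℤ) (α := Fin q) (⊤ : SimpleGraph V)
  rw [card_coloring_top, Fintype.card_fin, ← descPochhammer_eval_eq_descFactorial,
    descPochhammer_eval_eq_prod_range] at whitney
  simpa [Polynomial.eval_finsetSum, Polynomial.eval_prod] using whitney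

/-- For `k ≥ 1`, in `ℤ[t]` the sum over all simple graphs `G` on `Fin k`
of `(-1)^{e(G)} · t^{c(G)}` equals the falling factorial `∏_{l=0}^{k-1} (t - l)`,
where `e(G)` is the number of edges and `c(G)` the number of connected components. -/
theorem sum_graphs_sign_pow_components_eq_falling_factorial (k : ℕ) (hk : 1 ≤ k) :
    ∑ G : SimpleGraph (Fin k),
        (-1 : Polynomial ℤ) ^ (Nat.card G.edgeSet) *
          (Polynomial.X : Polynomial ℤ) ^ (Nat.card G.ConnectedComponent) =
      ∏ l ∈ Finset.range k, ((Polynomial.X : Polynomial ℤ) - Polynomial.C (l : ℤ)) := by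
  simpa only [Fintype.card_fin] using
    sum_graphs_sign_pow_components_eq_falling_factorial_general (V := Fin k)
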